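/- arXiv:1602.05940 — 5 statements merged into one kernel-verified Lean document; each statement's English description precedes it below -/
import Mathlib

section
/- For every m-OCA A over a nonempty finite alphabet Σ with state set Q, there exists a deterministic m-OCA A' over Σ with at most 2^{|Q|} states such that L_oca(A') = L_oca(A), L_vis(A') = L_vis(A), and L_obs(A') = L_obs(A). -/
/-! Common framework: one-counter automata (OCAs) over a finite alphabet,
with the classical (`oca`), visibly (`vis`) and observability (`obs`) semantics. -/

/-- Letters from an alphabet `α` together with the two counter operations
`inc` and `dec`. -/
inductive Vis (α : Type*) : Type _ where
  | sym : α → Vis α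
  | inc : Vis α
  | dec : Vis α

/-- A one-counter automaton (an `m`-OCA) over alphabet `α` with state set `Q`:
an initial state, a set of final states, a threshold `m`, and a transition
relation `Δ ⊆ Q × {0,…,m} × (α ∪ {inc,dec}) × Q`. -/
structure OCA (Q : Type*) (α : Type*) where
  init : Q
  final : Set Q
  m : ℕ
  Δ : Set (Q × ℕ × Vis α × Q)
  valid : ∀ t ∈ Δ, t.2.1 ≤ m

variable {Q α : Type*}

/-- One step of an OCA, labeled by an element of `(α × ℕ) ∪ {inc, dec}`. -/
def OCA.step (A : OCA Q α) : Q × ℕ → Vis (α × ℕ) → Q × ℕ → Prop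
  | (q, x), Vis.inc, (q', x') => x' = x + 1 ∧ (q, min x A.m, Vis.inc, q') ∈ A.Δ
  | (q, x), Vis.dec, (q', x') => 1 ≤ x ∧ x' = x - 1 ∧ (q, min x A.m, Vis.dec, q') ∈ A.Δ
  | (q, x), Vis.sym (a, y), (q', x') => y = x ∧ x' = x ∧ (q, min x A.m, Vis.sym a, q') ∈ A.Δ

/-- `A.RunFrom c ts cs` holds if there is a partial run of `A` starting in
configuration `c`, with trace `ts`, visiting exactly the configurations
listed in `cs` (starting with `c`). -/
inductive OCA.RunFrom (A : OCA Q α) : Q × ℕ → List (Vis (α × ℕ)) → List (Q × ℕ) → Prop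
  | nil (c : Q × ℕ) : OCA.RunFrom A c [] [c]
  | cons {c c' : Q × ℕ} {τ : Vis (α × ℕ)} {ts : List (Vis (α × ℕ))} {cs : List (Q × ℕ)} :
      A.step c τ c' → OCA.RunFrom A c' ts cs → OCA.RunFrom A c (τ :: ts) (c :: cs)

/-- `ts` is the trace of some accepting run of `A` (a run starting in the
initial configuration `(ι,0)` whose last configuration has a final state). -/
def OCA.AccTrace (A : OCA Q α) (ts : List (Vis (α × ℕ))) : Prop :=
  ∃ cs c, A.RunFrom (A.init, 0) ts cs ∧ cs.getLast? = some c ∧ c.1 ∈ A.final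

/-- Projection of a trace letter used for the visibly semantics:
`(a,x)` becomes `a`, and `inc`/`dec` are kept. -/
def visOf : Vis (α × ℕ) → Vis α
  | Vis.sym (a, _) => Vis.sym a
  | Vis.inc => Vis.inc
  | Vis.dec => Vis.dec

/-- The visibly projection of a trace. -/
def visMap (ts : List (Vis (α × ℕ))) : List (Vis α) := ts.map visOf

/-- The observability projection of a trace: keep the pairs `(a,x)`,
erase `inc`/`dec`. -/
def obsMap (ts : List (Vis (α × ℕ))) : List (α × ℕ) :=
  ts.filterMap fun τ => match τ with
    | Vis.sym p => some p
    | _ => none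

/-- The classical projection of a trace: `(a,x)` becomes `a`,
`inc`/`dec` are erased. -/
def ocaMap (ts : List (Vis (α × ℕ))) : List α :=
  ts.filterMap fun τ => match τ with
    | Vis.sym (a, _) => some a
    | _ => none

/-- The visibly semantics `L_vis(A)`. -/
def OCA.Lvis (A : OCA Q α) : Set (List (Vis α)) :=
  {w | ∃ ts, A.AccTrace ts ∧ visMap ts = w}

/-- The observability semantics `L_obs(A)`. -/
def OCA.Lobs (A : OCA Q α) : Set (List (α × ℕ)) :=
  {w | ∃ ts, A.AccTrace ts ∧ obsMap ts = w}

/-- The classical semantics `L_oca(A)`. -/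
def OCA.Loca (A : OCA Q α) : Set (List α) :=
  {w | ∃ ts, A.AccTrace ts ∧ ocaMap ts = w}

/-- An OCA is deterministic if for every state `q`, counter test `k ≤ m` and
letter `σ ∈ α ∪ {inc,dec}` there is exactly one target state. -/
def OCA.Deterministic (A : OCA Q α) : Prop :=
  ∀ (q : Q) (k : ℕ) (σ : Vis α), k ≤ A.m → ∃! q' : Q, (q, k, σ, q') ∈ A.Δ

/-- Test for the letter `inc`. -/
def isIncB : Vis α → Bool
  | Vis.inc => true
  | _ => false

/-- Test for the letter `dec`. -/
def isDecB : Vis α → Bool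
  | Vis.dec => true
  | _ => false

/-- Well-formed words over `α ∪ {inc,dec}`: no prefix contains more `dec`'s
than `inc`'s. -/
def WFWords (α : Type*) : Set (List (Vis α)) :=
  {w | ∀ p, p <+: w → p.countP isDecB ≤ p.countP isIncB}

/-- `encFrom x0 w` encodes `w ∈ (α × ℕ)*` starting from previous counter
value `x0`: each `(a,x)` becomes `inc^(x-x0) a` (if `x ≥ x0`) or
`dec^(x0-x) a` (otherwise). -/
def encFrom : ℕ → List (α × ℕ) → List (Vis α)
  | _, [] => []
  | x0, (a, x) :: w =>
      (if x0 ≤ x then List.replicate (x - x0) Vis.inc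
       else List.replicate (x0 - x) Vis.dec) ++ Vis.sym a :: encFrom x w

/-- The encoding `enc : (α × ℕ)* → (α ∪ {inc,dec})*`. -/
def enc (w : List (α × ℕ)) : List (Vis α) := encFrom 0 w

/-- The set `Enc_α` of valid encodings. -/
def EncSet (α : Type*) : Set (List (Vis α)) := Set.range (enc (α := α))

/-- A set `S ⊆ ℕ` is ultimately periodic if there are `t` and `d ≥ 1` such
that for all `x ≥ t`, `x ∈ S ↔ x + d ∈ S`. -/
def UltPeriodic (S : Set ℕ) : Prop :=
  ∃ t d : ℕ, 1 ≤ d ∧ ∀ x : ℕ, t ≤ x → (x ∈ S ↔ x + d ∈ S)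

/-- An extended OCA (eOCA): transitions are guarded by ultimately periodic
sets of counter values, and acceptance is given by an ultimately periodic set
of counter values for each state. -/
structure EOCA (Q : Type*) (α : Type*) where
  init : Q
  f : Q → Set ℕ
  hf : ∀ q, UltPeriodic (f q)
  Δ : Set (Q × Set ℕ × Vis α × Q)
  hΔfin : Δ.Finite
  hΔup : ∀ t ∈ Δ, UltPeriodic t.2.1

/-- One step of an eOCA. -/
def EOCA.step (A : EOCA Q α) : Q × ℕ → Vis (α × ℕ) → Q × ℕ → Prop
  | (q, x), Vis.inc, (q', x') =>
      x' = x + 1 ∧ ∃ S, (q, S, Vis.inc, q') ∈ A.Δ ∧ x ∈ S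
  | (q, x), Vis.dec, (q', x') =>
      1 ≤ x ∧ x' = x - 1 ∧ ∃ S, (q, S, Vis.dec, q') ∈ A.Δ ∧ x ∈ S
  | (q, x), Vis.sym (a, y), (q', x') =>
      y = x ∧ x' = x ∧ ∃ S, (q, S, Vis.sym a, q') ∈ A.Δ ∧ x ∈ S

/-- Partial runs of an eOCA, as for OCAs. -/
inductive EOCA.RunFrom (A : EOCA Q α) : Q × ℕ → List (Vis (α × ℕ)) → List (Q × ℕ) → Prop
  | nil (c : Q × ℕ) : EOCA.RunFrom A c [] [c]
  | cons {c c' : Q × ℕ} {τ : Vis (α × ℕ)} {ts : List (Vis (α × ℕ))} {cs : List (Q × ℕ)} :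
      A.step c τ c' → EOCA.RunFrom A c' ts cs → EOCA.RunFrom A c (τ :: ts) (c :: cs)

/-- Accepting traces of an eOCA: the last configuration `(q,x)` satisfies
`x ∈ f q`. -/
def EOCA.AccTrace (A : EOCA Q α) (ts : List (Vis (α × ℕ))) : Prop :=
  ∃ cs c, A.RunFrom (A.init, 0) ts cs ∧ cs.getLast? = some c ∧ c.2 ∈ A.f c.1

/-- The visibly semantics of an eOCA. -/
def EOCA.Lvis (A : EOCA Q α) : Set (List (Vis α)) :=
  {w | ∃ ts, A.AccTrace ts ∧ visMap ts = w}

/-- The observability semantics of an eOCA. -/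
def EOCA.Lobs (A : EOCA Q α) : Set (List (α × ℕ)) :=
  {w | ∃ ts, A.AccTrace ts ∧ obsMap ts = w}

/-- The classical semantics of an eOCA. -/
def EOCA.Loca (A : EOCA Q α) : Set (List α) :=
  {w | ∃ ts, A.AccTrace ts ∧ ocaMap ts = w}

/-! The labels of a trace determine all the counter values of a run with that trace, so all runs of
`A` with the same trace agree on every counter test, and it is enough to record the set of states
they reach. The powerset automaton therefore has the same accepting traces as `A`, and each of the
three semantics is a function of the set of accepting traces. -/

namespace OCA

/-- The effect on the counter of a step labelled `τ`: `x` may become `x'`, whatever the states and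
transitions involved. -/
def CounterStep : ℕ → Vis (α × ℕ) → ℕ → Prop
  | x, Vis.inc, x' => x' = x + 1
  | x, Vis.dec, x' => 1 ≤ x ∧ x' = x - 1
  | x, Vis.sym (_, y), x' => y = x ∧ x' = x

theorem step_iff (A : OCA Q α) {q q' : Q} {x x' : ℕ} {τ : Vis (α × ℕ)} :
    A.step (q, x) τ (q', x') ↔ CounterStep x τ x' ∧ (q, min x A.m, visOf τ, q') ∈ A.Δ := by
  rcases τ with ⟨a, y⟩ | _ | _ <;> simp only [step, CounterStep, visOf, and_assoc]

/-- Acceptance of the trace `ts` from an arbitrary configuration `c`; `A.AccTrace` is the case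
`c = (A.init, 0)`. -/
def AccFrom (A : OCA Q α) (c : Q × ℕ) (ts : List (Vis (α × ℕ))) : Prop :=
  ∃ cs d, A.RunFrom c ts cs ∧ cs.getLast? = some d ∧ d.1 ∈ A.final

theorem accFrom_nil (A : OCA Q α) {c : Q × ℕ} : A.AccFrom c [] ↔ c.1 ∈ A.final := by
  constructor
  · rintro ⟨_, d, ⟨⟩, hlast, hfinal⟩
    obtain rfl : c = d := by simpa using hlast
    exact hfinal
  · exact fun hfinal ↦ ⟨[c], c, .nil c, rfl, hfinal⟩

theorem RunFrom.getLast?_cons {A : OCA Q α} {c : Q × ℕ} {ts : List (Vis (α × ℕ))}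
    {cs : List (Q × ℕ)} (h : A.RunFrom c ts cs) (d : Q × ℕ) :
    (d :: cs).getLast? = cs.getLast? := by
  cases h <;> rfl

theorem accFrom_cons (A : OCA Q α) {c : Q × ℕ} {τ : Vis (α × ℕ)} {ts : List (Vis (α × ℕ))} :
    A.AccFrom c (τ :: ts) ↔ ∃ c', A.step c τ c' ∧ A.AccFrom c' ts := by
  constructor
  · rintro ⟨_, d, _ | ⟨hstep, hrun⟩, hlast, hfinal⟩
    exact ⟨_, hstep, _, d, hrun, (hrun.getLast?_cons c).symm.trans hlast, hfinal⟩
  · rintro ⟨c', hstep, cs, d, hrun, hlast, hfinal⟩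
    exact ⟨c :: cs, d, .cons hstep hrun, (hrun.getLast?_cons c).trans hlast, hfinal⟩

/-- The successors of the set of states `S` under the letter `σ` when the counter test yields
`k`. -/
def post (A : OCA Q α) (S : Set Q) (k : ℕ) (σ : Vis α) : Set Q :=
  {q' | ∃ q ∈ S, (q, k, σ, q') ∈ A.Δ}

/-- The powerset automaton of `A`: reading a trace leads to the set of all states in which a run of
`A` with this trace can end. -/
def det (A : OCA Q α) : OCA (Set Q) α where
  init := {A.init}
  final := {S | ∃ q ∈ S, q ∈ A.final}
  m := A.m
  Δ := {(S, k, σ, S') : Set Q × ℕ × Vis α × Set Q | k ≤ A.m ∧ S' = A.post S k σ}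
  valid := fun _ h ↦ h.1

theorem det_deterministic (A : OCA Q α) : A.det.Deterministic :=
  fun S k σ hk ↦ ⟨A.post S k σ, ⟨hk, rfl⟩, fun _ h ↦ h.2⟩

theorem det_step_iff (A : OCA Q α) {S S' : Set Q} {x x' : ℕ} {τ : Vis (α × ℕ)} :
    A.det.step (S, x) τ (S', x') ↔
      CounterStep x τ x' ∧ S' = A.post S (min x A.m) (visOf τ) := by
  rw [step_iff]
  exact and_congr_right fun _ ↦ and_iff_right (min_le_right x A.m)

theorem det_accFrom_iff (A : OCA Q α) {S : Set Q} {x : ℕ} {ts : List (Vis (α × ℕ))} :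
    A.det.AccFrom (S, x) ts ↔ ∃ q ∈ S, A.AccFrom (q, x) ts := by
  induction ts generalizing S x with
  | nil => simp only [accFrom_nil]; rfl
  | cons τ ts ih =>
    calc A.det.AccFrom (S, x) (τ :: ts)
        ↔ ∃ x', CounterStep x τ x' ∧
            A.det.AccFrom (A.post S (min x A.m) (visOf τ), x') ts := by
          simp only [accFrom_cons, Prod.exists, det_step_iff, and_assoc, exists_comm (α := Set Q),
            exists_and_left, exists_eq_left]
      _ ↔ ∃ x', CounterStep x τ x' ∧
            ∃ q' ∈ A.post S (min x A.m) (visOf τ), A.AccFrom (q', x') ts := by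
          simp only [ih]
      _ ↔ ∃ q ∈ S, ∃ q' x', (CounterStep x τ x' ∧ (q, min x A.m, visOf τ, q') ∈ A.Δ) ∧
            A.AccFrom (q', x') ts := by
          simp only [post, Set.mem_ofPred_eq]
          grind
      _ ↔ ∃ q ∈ S, A.AccFrom (q, x) (τ :: ts) := by
          simp only [accFrom_cons, Prod.exists, step_iff]

theorem det_accTrace (A : OCA Q α) : A.det.AccTrace = A.AccTrace := by
  ext ts
  calc A.det.AccTrace ts
      ↔ ∃ q ∈ ({A.init} : Set Q), A.AccFrom (q, 0) ts := A.det_accFrom_iff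
    _ ↔ A.AccTrace ts := exists_eq_left

end OCA

theorem stmt1_general (A : OCA Q α) :
    ∃ A' : OCA (Set Q) α, A'.m = A.m ∧ A'.Deterministic ∧
      A'.Loca = A.Loca ∧ A'.Lvis = A.Lvis ∧ A'.Lobs = A.Lobs := by
  refine ⟨A.det, rfl, A.det_deterministic, ?_, ?_, ?_⟩
  · simp only [OCA.Loca, A.det_accTrace]
  · simp only [OCA.Lvis, A.det_accTrace]
  · simp only [OCA.Lobs, A.det_accTrace]

/-- determinization of OCAs (powerset construction), preserving
all three semantics, with at most `2^|Q|` states. -/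
theorem stmt1 {α Q : Type} [Fintype α] [Nonempty α] [Fintype Q] (A : OCA Q α) :
    ∃ (Q' : Type) (_ : Fintype Q') (A' : OCA Q' α),
      Fintype.card Q' ≤ 2 ^ Fintype.card Q ∧
      A'.m = A.m ∧
      A'.Deterministic ∧
      A'.Loca = A.Loca ∧ A'.Lvis = A.Lvis ∧ A'.Lobs = A.Lobs := by
  classical
  obtain ⟨A', hA'⟩ := stmt1_general A
  exact ⟨Set Q, inferInstance, A', Fintype.card_set.le, hA'⟩
end

section
/- For every nonempty finite alphabet Σ there exists a deterministic 0-OCA B over Σ with at most four states such that L_vis(B) = Enc_Σ, the set of valid encodings. -/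
variable {Q α : Type*}

/-!
The automaton remembers which phase of a block `inc^n a` or `dec^n a` it is in: it has just
read a letter, is incrementing, is decrementing, or has seen `inc` and `dec` in the same block,
which leads to a sink. The words it accepts from counter value `x` in the first three states are
the encodings continuing from `x`, arbitrary or with a first target value at least, respectively
at most, `x`. Both these sets of encodings and the accepted languages are determined by what
remains after removing the first letter, and they satisfy the same recursion.
-/

namespace OCA

/-- The visibly language of `A` when runs start in the configuration `c` instead of `(ι,0)`. -/
def LvisFrom (A : OCA Q α) (c : Q × ℕ) : Set (List (Vis α)) :=
  {w | ∃ ts, (∃ cs d, A.RunFrom c ts cs ∧ cs.getLast? = some d ∧ d.1 ∈ A.final) ∧ visMap ts = w}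

theorem Lvis_eq_LvisFrom (A : OCA Q α) : A.Lvis = A.LvisFrom (A.init, 0) := rfl

theorem RunFrom.ne_nil {A : OCA Q α} {c : Q × ℕ} {ts : List (Vis (α × ℕ))} {cs : List (Q × ℕ)}
    (h : A.RunFrom c ts cs) : cs ≠ [] := by
  cases h <;> exact List.cons_ne_nil _ _

theorem nil_mem_LvisFrom {A : OCA Q α} {c : Q × ℕ} : [] ∈ A.LvisFrom c ↔ c.1 ∈ A.final := by
  constructor
  · rintro ⟨ts, ⟨cs, d, hrun, hlast, hd⟩, hts⟩
    cases hrun with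
    | nil => cases hlast; exact hd
    | cons => cases hts
  · exact fun hc => ⟨[], ⟨[c], c, .nil c, rfl, hc⟩, rfl⟩

theorem cons_mem_LvisFrom {A : OCA Q α} {c : Q × ℕ} {σ : Vis α} {w : List (Vis α)} :
    σ :: w ∈ A.LvisFrom c ↔ ∃ τ c', visOf τ = σ ∧ A.step c τ c' ∧ w ∈ A.LvisFrom c' := by
  constructor
  · rintro ⟨ts, ⟨cs, d, hrun, hlast, hd⟩, hts⟩
    cases hrun with
    | nil => cases hts
    | cons hstep hrun =>
      obtain ⟨hσ, hw⟩ := List.cons.inj hts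
      exact ⟨_, _, hσ, hstep, _, ⟨_, d, hrun, hrun.getLast?_cons _ ▸ hlast, hd⟩, hw⟩
  · rintro ⟨τ, c', rfl, hstep, ts, ⟨cs, d, hrun, hlast, hd⟩, rfl⟩
    exact ⟨τ :: ts, ⟨c :: cs, d, .cons hstep hrun, hrun.getLast?_cons c ▸ hlast, hd⟩, rfl⟩

/-- The deterministic `m`-OCA given by a transition function, whose `ℕ`-argument is the
counter test `min x m`. -/
def ofTransition (ι : Q) (F : Set Q) (m : ℕ) (δ : Q → ℕ → Vis α → Q) : OCA Q α where
  init := ι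
  final := F
  m := m
  Δ := {t | t.2.1 ≤ m ∧ t.2.2.2 = δ t.1 t.2.1 t.2.2.1}
  valid _ ht := ht.1

section OfTransition

variable {ι : Q} {F : Set Q} {m : ℕ} {δ : Q → ℕ → Vis α → Q} {q : Q} {x : ℕ} {w : List (Vis α)}

theorem deterministic_ofTransition : (ofTransition ι F m δ).Deterministic :=
  fun q k σ hk => ⟨δ q k σ, ⟨hk, rfl⟩, fun _ h => h.2⟩

theorem sym_cons_mem_LvisFrom_ofTransition {a : α} :
    Vis.sym a :: w ∈ (ofTransition ι F m δ).LvisFrom (q, x) ↔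
      w ∈ (ofTransition ι F m δ).LvisFrom (δ q (min x m) (.sym a), x) := by
  rw [cons_mem_LvisFrom]
  constructor
  · rintro ⟨⟨b, y⟩ | _ | _, ⟨q', x'⟩, hσ, hstep, hw⟩ <;> cases hσ
    obtain ⟨rfl, rfl, -, hq'⟩ := hstep
    exact hq' ▸ hw
  · exact fun hw => ⟨.sym (a, x), _, rfl, ⟨rfl, rfl, min_le_right _ _, rfl⟩, hw⟩

theorem inc_cons_mem_LvisFrom_ofTransition :
    Vis.inc :: w ∈ (ofTransition ι F m δ).LvisFrom (q, x) ↔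
      w ∈ (ofTransition ι F m δ).LvisFrom (δ q (min x m) .inc, x + 1) := by
  rw [cons_mem_LvisFrom]
  constructor
  · rintro ⟨_ | _ | _, ⟨q', x'⟩, hσ, hstep, hw⟩ <;> cases hσ
    obtain ⟨rfl, -, hq'⟩ := hstep
    exact hq' ▸ hw
  · exact fun hw => ⟨.inc, _, rfl, ⟨rfl, min_le_right _ _, rfl⟩, hw⟩

theorem dec_cons_mem_LvisFrom_ofTransition :
    Vis.dec :: w ∈ (ofTransition ι F m δ).LvisFrom (q, x) ↔
      1 ≤ x ∧ w ∈ (ofTransition ι F m δ).LvisFrom (δ q (min x m) .dec, x - 1) := by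
  rw [cons_mem_LvisFrom]
  constructor
  · rintro ⟨_ | _ | _, ⟨q', x'⟩, hσ, hstep, hw⟩ <;> cases hσ
    obtain ⟨hx, rfl, -, hq'⟩ := hstep
    exact ⟨hx, hq' ▸ hw⟩
  · exact fun ⟨hx, hw⟩ => ⟨.dec, _, rfl, ⟨hx, rfl, min_le_right _ _, rfl⟩, hw⟩

end OfTransition

end OCA

section Encodings

variable {a : α} {x y : ℕ} {v : List (α × ℕ)} {w : List (Vis α)}

theorem encFrom_cons_self : encFrom x ((a, x) :: v) = .sym a :: encFrom x v := by
  simp [encFrom]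

theorem encFrom_cons_of_lt (h : x < y) :
    encFrom x ((a, y) :: v) = .inc :: encFrom (x + 1) ((a, y) :: v) := by
  have hsub : y - x = y - (x + 1) + 1 := by omega
  simp only [encFrom, if_pos h.le, if_pos (Nat.succ_le_of_lt h), hsub, List.replicate_succ,
    List.cons_append]

theorem encFrom_cons_of_gt (h : y < x) :
    encFrom x ((a, y) :: v) = .dec :: encFrom (x - 1) ((a, y) :: v) := by
  obtain rfl | hlt : y = x - 1 ∨ y < x - 1 := by omega
  · have hsub : x - (x - 1) = 1 := by omega
    simp [encFrom, h.not_ge, hsub]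
  · have hsub : x - y = x - 1 - y + 1 := by omega
    simp only [encFrom, if_neg h.not_ge, if_neg hlt.not_ge, hsub, List.replicate_succ,
      List.cons_append]

/-- The encodings of nonempty words, continuing from counter value `x`, whose first target value
is at least `x`: what may follow while a block is incrementing. -/
def risingEnc (α : Type*) (x : ℕ) : Set (List (Vis α)) :=
  {w | ∃ a y v, x ≤ y ∧ encFrom x ((a, y) :: v) = w}

/-- The encodings of nonempty words, continuing from counter value `x`, whose first target value
is at most `x`: what may follow while a block is decrementing. -/
def fallingEnc (α : Type*) (x : ℕ) : Set (List (Vis α)) :=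
  {w | ∃ a y v, y ≤ x ∧ encFrom x ((a, y) :: v) = w}

theorem mem_range_encFrom_iff :
    w ∈ Set.range (encFrom x) ↔ w = [] ∨ w ∈ risingEnc α x ∨ w ∈ fallingEnc α x := by
  constructor
  · rintro ⟨_ | ⟨⟨a, y⟩, v⟩, rfl⟩
    · exact .inl rfl
    · exact .inr ((le_total x y).imp (⟨a, y, v, ·, rfl⟩) (⟨a, y, v, ·, rfl⟩))
  · rintro (rfl | ⟨a, y, v, -, rfl⟩ | ⟨a, y, v, -, rfl⟩)
    exacts [⟨[], rfl⟩, ⟨_, rfl⟩, ⟨_, rfl⟩]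

theorem mem_risingEnc_iff :
    w ∈ risingEnc α x ↔
      (∃ a, ∃ u ∈ Set.range (encFrom x), w = .sym a :: u) ∨
        ∃ u ∈ risingEnc α (x + 1), w = .inc :: u := by
  constructor
  · rintro ⟨a, y, v, hxy, rfl⟩
    obtain rfl | hlt := hxy.eq_or_lt
    · exact .inl ⟨a, _, ⟨v, rfl⟩, encFrom_cons_self⟩
    · exact .inr ⟨_, ⟨a, y, v, hlt, rfl⟩, encFrom_cons_of_lt hlt⟩
  · rintro (⟨a, _, ⟨v, rfl⟩, rfl⟩ | ⟨_, ⟨a, y, v, hxy, rfl⟩, rfl⟩)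
    · exact ⟨a, x, v, le_rfl, encFrom_cons_self⟩
    · exact ⟨a, y, v, Nat.le_of_succ_le hxy, encFrom_cons_of_lt hxy⟩

theorem mem_fallingEnc_iff :
    w ∈ fallingEnc α x ↔
      (∃ a, ∃ u ∈ Set.range (encFrom x), w = .sym a :: u) ∨
        1 ≤ x ∧ ∃ u ∈ fallingEnc α (x - 1), w = .dec :: u := by
  constructor
  · rintro ⟨a, y, v, hyx, rfl⟩
    obtain rfl | hlt := hyx.eq_or_lt
    · exact .inl ⟨a, _, ⟨v, rfl⟩, encFrom_cons_self⟩
    · exact .inr ⟨Nat.one_le_of_lt hlt,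
        _, ⟨a, y, v, Nat.le_sub_one_of_lt hlt, rfl⟩, encFrom_cons_of_gt hlt⟩
  · rintro (⟨a, _, ⟨v, rfl⟩, rfl⟩ | ⟨hx, _, ⟨a, y, v, hyx, rfl⟩, rfl⟩)
    · exact ⟨a, x, v, le_rfl, encFrom_cons_self⟩
    · have hlt : y < x := Nat.lt_of_le_sub_one hx hyx
      exact ⟨a, y, v, hlt.le, encFrom_cons_of_gt hlt⟩

theorem nil_notMem_risingEnc : [] ∉ risingEnc α x := by
  rw [mem_risingEnc_iff]; simp

theorem nil_notMem_fallingEnc : [] ∉ fallingEnc α x := by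
  rw [mem_fallingEnc_iff]; simp

theorem sym_cons_mem_risingEnc : .sym a :: w ∈ risingEnc α x ↔ w ∈ Set.range (encFrom x) := by
  rw [mem_risingEnc_iff]; simp

theorem sym_cons_mem_fallingEnc : .sym a :: w ∈ fallingEnc α x ↔ w ∈ Set.range (encFrom x) := by
  rw [mem_fallingEnc_iff]; simp

theorem inc_cons_mem_risingEnc : .inc :: w ∈ risingEnc α x ↔ w ∈ risingEnc α (x + 1) := by
  rw [mem_risingEnc_iff]; simp

theorem inc_cons_notMem_fallingEnc : .inc :: w ∉ fallingEnc α x := by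
  rw [mem_fallingEnc_iff]; simp

theorem dec_cons_notMem_risingEnc : .dec :: w ∉ risingEnc α x := by
  rw [mem_risingEnc_iff]; simp

theorem dec_cons_mem_fallingEnc :
    .dec :: w ∈ fallingEnc α x ↔ 1 ≤ x ∧ w ∈ fallingEnc α (x - 1) := by
  rw [mem_fallingEnc_iff]; simp

end Encodings

/-- The states of the automaton recognizing valid encodings: `letter` between two blocks, `rising`
and `falling` inside a block of `inc`s or `dec`s, and the rejecting `sink`. -/
inductive EncState
  | letter
  | rising
  | falling
  | sink
  deriving DecidableEq

namespace EncState

instance : Fintype EncState where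
  elems := {letter, rising, falling, sink}
  complete q := by cases q <;> decide

/-- The transition function of the automaton recognizing valid encodings. -/
def next : EncState → Vis α → EncState
  | sink, _ => sink
  | _, .sym _ => letter
  | letter, .inc | rising, .inc => rising
  | letter, .dec | falling, .dec => falling
  | rising, .dec | falling, .inc => sink

/-- The language that the automaton recognizing valid encodings accepts from a given state and
counter value, described through encodings. -/
def residual (α : Type*) : EncState → ℕ → Set (List (Vis α))
  | letter, x => Set.range (encFrom x)
  | rising, x => risingEnc α x
  | falling, x => fallingEnc α x
  | sink, _ => ∅

variable {q : EncState} {x : ℕ} {w : List (Vis α)}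

theorem nil_mem_residual : [] ∈ residual α q x ↔ q = letter := by
  cases q <;> simp [residual, mem_range_encFrom_iff, nil_notMem_risingEnc, nil_notMem_fallingEnc,
    -Set.mem_range]

theorem sym_cons_mem_residual {a : α} :
    .sym a :: w ∈ residual α q x ↔ w ∈ residual α (q.next (.sym a)) x := by
  cases q <;> simp [residual, next, mem_range_encFrom_iff (w := .sym a :: w),
    sym_cons_mem_risingEnc, sym_cons_mem_fallingEnc, -Set.mem_range]

theorem inc_cons_mem_residual :
    .inc :: w ∈ residual α q x ↔ w ∈ residual α (q.next (.inc : Vis α)) (x + 1) := by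
  cases q <;> simp [residual, next, mem_range_encFrom_iff, inc_cons_mem_risingEnc,
    inc_cons_notMem_fallingEnc, -Set.mem_range]

theorem dec_cons_mem_residual :
    .dec :: w ∈ residual α q x ↔ 1 ≤ x ∧ w ∈ residual α (q.next (.dec : Vis α)) (x - 1) := by
  cases q <;> simp [residual, next, mem_range_encFrom_iff, dec_cons_notMem_risingEnc,
    dec_cons_mem_fallingEnc, -Set.mem_range]

end EncState

/-- The deterministic `0`-OCA recognizing valid encodings; it never tests its counter, since a
`dec` at counter value `0` has no step at all. -/
def encOCA (α : Type*) : OCA EncState α :=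
  .ofTransition .letter {.letter} 0 fun q _ σ => q.next σ

theorem mem_LvisFrom_encOCA {q : EncState} {x : ℕ} {w : List (Vis α)} :
    w ∈ (encOCA α).LvisFrom (q, x) ↔ w ∈ q.residual α x := by
  induction w generalizing q x with
  | nil => exact OCA.nil_mem_LvisFrom.trans EncState.nil_mem_residual.symm
  | cons σ w ih =>
    rcases σ with a | _ | _
    · exact OCA.sym_cons_mem_LvisFrom_ofTransition.trans
        (ih.trans EncState.sym_cons_mem_residual.symm)
    · exact OCA.inc_cons_mem_LvisFrom_ofTransition.trans
        (ih.trans EncState.inc_cons_mem_residual.symm)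
    · exact OCA.dec_cons_mem_LvisFrom_ofTransition.trans
        ((and_congr_right' ih).trans EncState.dec_cons_mem_residual.symm)

theorem Lvis_encOCA : (encOCA α).Lvis = EncSet α :=
  (OCA.Lvis_eq_LvisFrom _).trans (Set.ext fun _ => mem_LvisFrom_encOCA)

theorem stmt4_general (α : Type*) :
    ∃ (Q : Type) (_ : Fintype Q) (B : OCA Q α),
      Fintype.card Q ≤ 4 ∧ B.m = 0 ∧ B.Deterministic ∧ B.Lvis = EncSet α :=
  ⟨EncState, inferInstance, encOCA α, (by decide), rfl, OCA.deterministic_ofTransition, Lvis_encOCA⟩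

/-- there is a deterministic 0-OCA with at most four states whose
visibly semantics is the set of valid encodings. -/
theorem stmt4 {α : Type} [Fintype α] [Nonempty α] :
    ∃ (Q : Type) (_ : Fintype Q) (B : OCA Q α),
      Fintype.card Q ≤ 4 ∧ B.m = 0 ∧ B.Deterministic ∧ B.Lvis = EncSet α :=
  stmt4_general α
end

section
/- The map enc : (Σ×ℕ)* → (Σ ∪ {inc,dec})* is injective, and its image Enc_Σ equals the set of all words of the form u1 a1 u2 a2 ⋯ un an (n ≥ 0) with each ai ∈ Σ and each ui ∈ {inc}* ∪ {dec}*, such that no prefix of the word contains more occurrences of dec than of inc. -/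
variable {Q α : Type*}

/-! Reading `enc w` while running the counter returns every pair `(a, x)`, so decoding inverts
`enc`. Conversely, the current value `x` and a block `u ∈ inc* ∪ dec*` determine the value `y`
reached after `u`; the prefix condition says exactly that no `dec` is read at value `0`, and then
`u` is the block that `enc` writes to move the counter from `x` to `y`. Both arguments are
inductions over the blocks, for which the initial counter value must be arbitrary. -/

/-- The block `inc^(y-x)` or `dec^(x-y)` that the encoding uses to move the counter from
`x` to `y`. -/
def counterMove (x y : ℕ) : List (Vis α) :=
  if x ≤ y then List.replicate (y - x) Vis.inc else List.replicate (x - y) Vis.dec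

/-- Decoding of a word read from counter value `x`: each symbol is paired with the current counter
value. A `dec` read at value `0` leaves the counter at `0`. -/
def decodeFrom : ℕ → List (Vis α) → List (α × ℕ)
  | _, [] => []
  | x, Vis.inc :: w => decodeFrom (x + 1) w
  | x, Vis.dec :: w => decodeFrom (x - 1) w
  | x, Vis.sym a :: w => (a, x) :: decodeFrom x w

/-- Well-formedness relative to an initial counter value `x`: reading the word from `x`, the counter
never becomes negative. The set `WFWords α` is the case `x = 0`. -/
def WFFrom (x : ℕ) (w : List (Vis α)) : Prop :=
  ∀ p, p <+: w → p.countP isDecB ≤ x + p.countP isIncB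

/-- The blocks in `inc* ∪ dec*`. -/
def IsCounterBlock (u : List (Vis α)) : Prop :=
  (∀ τ ∈ u, τ = Vis.inc) ∨ (∀ τ ∈ u, τ = Vis.dec)

/-- The word `u₁a₁u₂a₂⋯uₙaₙ` with blocks `uᵢ` and symbols `aᵢ`. -/
def blockWord (l : List (List (Vis α) × α)) : List (Vis α) :=
  (l.map fun p => p.1 ++ [Vis.sym p.2]).flatten

theorem blockWord_cons (u : List (Vis α)) (a : α) (l : List (List (Vis α) × α)) :
    blockWord ((u, a) :: l) = u ++ Vis.sym a :: blockWord l := by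
  simp [blockWord]

theorem encFrom_cons (x y : ℕ) (a : α) (w : List (α × ℕ)) :
    encFrom x ((a, y) :: w) = counterMove x y ++ Vis.sym a :: encFrom y w :=
  rfl

theorem counterMove_self_add (x n : ℕ) :
    counterMove x (x + n) = List.replicate n (Vis.inc : Vis α) := by
  simp [counterMove]

theorem counterMove_add_self (x n : ℕ) :
    counterMove (x + n) x = List.replicate n (Vis.dec : Vis α) := by
  cases n <;> simp [counterMove]

theorem isCounterBlock_counterMove (x y : ℕ) : IsCounterBlock (counterMove x y : List (Vis α)) := by
  unfold counterMove
  split_ifs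
  · exact .inl fun _ => List.eq_of_mem_replicate
  · exact .inr fun _ => List.eq_of_mem_replicate

theorem IsCounterBlock.exists_eq_replicate {u : List (Vis α)} (hu : IsCounterBlock u) :
    ∃ n, u = List.replicate n Vis.inc ∨ u = List.replicate n Vis.dec :=
  ⟨u.length, hu.imp List.eq_replicate_of_mem List.eq_replicate_of_mem⟩

theorem decodeFrom_replicate_inc_append (x n : ℕ) (w : List (Vis α)) :
    decodeFrom x (List.replicate n Vis.inc ++ w) = decodeFrom (x + n) w := by
  induction n generalizing x with
  | zero => rfl
  | succ n ih =>
    rw [List.replicate_succ, List.cons_append, decodeFrom, ih, Nat.add_right_comm, Nat.add_assoc]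

theorem decodeFrom_replicate_dec_append (x n : ℕ) (w : List (Vis α)) :
    decodeFrom x (List.replicate n Vis.dec ++ w) = decodeFrom (x - n) w := by
  induction n generalizing x with
  | zero => rfl
  | succ n ih =>
    rw [List.replicate_succ, List.cons_append, decodeFrom, ih, Nat.sub_right_comm, Nat.sub_sub]

theorem decodeFrom_counterMove_append (x y : ℕ) (w : List (Vis α)) :
    decodeFrom x (counterMove x y ++ w) = decodeFrom y w := by
  rcases Nat.le_total x y with h | h <;> obtain ⟨n, rfl⟩ := Nat.exists_eq_add_of_le h
  · rw [counterMove_self_add, decodeFrom_replicate_inc_append]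
  · rw [counterMove_add_self, decodeFrom_replicate_dec_append, Nat.add_sub_cancel]

theorem decodeFrom_encFrom (x : ℕ) (w : List (α × ℕ)) : decodeFrom x (encFrom x w) = w := by
  induction w generalizing x with
  | nil => rfl
  | cons p w ih =>
    obtain ⟨a, y⟩ := p
    rw [encFrom_cons, decodeFrom_counterMove_append, decodeFrom, ih]

theorem encFrom_injective (x : ℕ) : Function.Injective (encFrom (α := α) x) :=
  Function.LeftInverse.injective (decodeFrom_encFrom x)

theorem wfFrom_zero_iff {w : List (Vis α)} : WFFrom 0 w ↔ w ∈ WFWords α := by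
  simp only [WFFrom, WFWords, Set.mem_ofPred_eq, Nat.zero_add]

theorem wfFrom_nil (x : ℕ) : WFFrom x ([] : List (Vis α)) := by
  simp [WFFrom]

theorem wfFrom_cons_iff {x : ℕ} {τ : Vis α} {w : List (Vis α)} :
    WFFrom x (τ :: w) ↔
      ∀ p, p <+: w → (τ :: p).countP isDecB ≤ x + (τ :: p).countP isIncB := by
  refine ⟨fun h p hp => h _ (List.cons_prefix_cons.2 ⟨rfl, hp⟩), fun h p hp => ?_⟩
  rcases List.prefix_cons_iff.1 hp with rfl | ⟨q, rfl, hq⟩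
  · exact Nat.zero_le _
  · exact h q hq

theorem wfFrom_sym_cons {x : ℕ} {a : α} {w : List (Vis α)} :
    WFFrom x (Vis.sym a :: w) ↔ WFFrom x w := by
  rw [wfFrom_cons_iff]
  simp [WFFrom, isDecB, isIncB]

theorem wfFrom_inc_cons {x : ℕ} {w : List (Vis α)} :
    WFFrom x (Vis.inc :: w) ↔ WFFrom (x + 1) w := by
  rw [wfFrom_cons_iff]
  simp [WFFrom, List.countP_cons, isDecB, isIncB, Nat.add_assoc, Nat.add_comm 1]

theorem wfFrom_succ_dec_cons {x : ℕ} {w : List (Vis α)} :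
    WFFrom (x + 1) (Vis.dec :: w) ↔ WFFrom x w := by
  rw [wfFrom_cons_iff]
  simp [WFFrom, List.countP_cons, isDecB, isIncB, Nat.add_right_comm]

theorem wfFrom_replicate_inc_append {x n : ℕ} {w : List (Vis α)} :
    WFFrom x (List.replicate n Vis.inc ++ w) ↔ WFFrom (x + n) w := by
  induction n generalizing x with
  | zero => rfl
  | succ n ih =>
    rw [List.replicate_succ, List.cons_append, wfFrom_inc_cons, ih, Nat.add_right_comm,
      Nat.add_assoc]

theorem wfFrom_add_replicate_dec_append {x n : ℕ} {w : List (Vis α)} :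
    WFFrom (x + n) (List.replicate n Vis.dec ++ w) ↔ WFFrom x w := by
  induction n with
  | zero => rfl
  | succ n ih =>
    rw [List.replicate_succ, List.cons_append, ← Nat.add_assoc, wfFrom_succ_dec_cons, ih]

theorem WFFrom.le_of_replicate_dec_append {x n : ℕ} {w : List (Vis α)}
    (h : WFFrom x (List.replicate n Vis.dec ++ w)) : n ≤ x := by
  simpa [List.countP_replicate, isDecB, isIncB] using h _ (List.prefix_append _ w)

theorem wfFrom_counterMove_append {x y : ℕ} {w : List (Vis α)} :
    WFFrom x (counterMove x y ++ w) ↔ WFFrom y w := by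
  rcases Nat.le_total x y with h | h <;> obtain ⟨n, rfl⟩ := Nat.exists_eq_add_of_le h
  · rw [counterMove_self_add, wfFrom_replicate_inc_append]
  · rw [counterMove_add_self, wfFrom_add_replicate_dec_append]

theorem WFFrom.exists_eq_counterMove {x : ℕ} {u w : List (Vis α)}
    (h : WFFrom x (u ++ w)) (hu : IsCounterBlock u) : ∃ y, u = counterMove x y := by
  obtain ⟨n, rfl | rfl⟩ := hu.exists_eq_replicate
  · exact ⟨x + n, (counterMove_self_add x n).symm⟩
  · obtain ⟨y, rfl⟩ := Nat.exists_eq_add_of_le' h.le_of_replicate_dec_append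
    exact ⟨y, (counterMove_add_self y n).symm⟩

theorem wfFrom_encFrom (x : ℕ) (w : List (α × ℕ)) : WFFrom x (encFrom x w) := by
  induction w generalizing x with
  | nil => exact wfFrom_nil x
  | cons p w ih =>
    obtain ⟨a, y⟩ := p
    rw [encFrom_cons, wfFrom_counterMove_append, wfFrom_sym_cons]
    exact ih y

theorem exists_encFrom_eq_blockWord (x : ℕ) (w : List (α × ℕ)) :
    ∃ l, encFrom x w = blockWord l ∧ ∀ p ∈ l, IsCounterBlock p.1 := by
  induction w generalizing x with
  | nil => exact ⟨[], rfl, List.forall_mem_nil _⟩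
  | cons p w ih =>
    obtain ⟨a, y⟩ := p
    obtain ⟨l, hw, hl⟩ := ih y
    exact ⟨(counterMove x y, a) :: l, by rw [encFrom_cons, blockWord_cons, hw],
      List.forall_mem_cons.2 ⟨isCounterBlock_counterMove x y, hl⟩⟩

theorem WFFrom.blockWord_mem_range_encFrom {x : ℕ} {l : List (List (Vis α) × α)}
    (h : WFFrom x (blockWord l)) (hl : ∀ p ∈ l, IsCounterBlock p.1) :
    blockWord l ∈ Set.range (encFrom x) := by
  induction l generalizing x with
  | nil => exact ⟨[], rfl⟩
  | cons p l ih =>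
    obtain ⟨u, a⟩ := p
    obtain ⟨hu, hl'⟩ := List.forall_mem_cons.1 hl
    rw [blockWord_cons] at h ⊢
    obtain ⟨y, rfl⟩ := h.exists_eq_counterMove hu
    obtain ⟨w, hw⟩ := ih (wfFrom_sym_cons.1 (wfFrom_counterMove_append.1 h)) hl'
    exact ⟨(a, y) :: w, by rw [encFrom_cons, hw]⟩

theorem range_encFrom (x : ℕ) :
    Set.range (encFrom (α := α) x) =
      {w | (∃ l, w = blockWord l ∧ ∀ p ∈ l, IsCounterBlock p.1) ∧ WFFrom x w} := by
  ext w
  constructor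
  · rintro ⟨v, rfl⟩
    exact ⟨exists_encFrom_eq_blockWord x v, wfFrom_encFrom x v⟩
  · rintro ⟨⟨l, rfl, hl⟩, h⟩
    exact h.blockWord_mem_range_encFrom hl

theorem stmt5_general {α : Type*} :
    Function.Injective (enc (α := α)) ∧
    EncSet α =
      {w | (∃ l : List (List (Vis α) × α),
              w = (l.map fun p => p.1 ++ [Vis.sym p.2]).flatten ∧
              ∀ p ∈ l, (∀ τ ∈ p.1, τ = Vis.inc) ∨ (∀ τ ∈ p.1, τ = Vis.dec)) ∧
           ∀ p, p <+: w → p.countP isDecB ≤ p.countP isIncB} := by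
  refine ⟨encFrom_injective 0, (range_encFrom 0).trans ?_⟩
  simp only [wfFrom_zero_iff]
  rfl

/-- `enc` is injective and its image is exactly the set of words
of the form `u₁a₁u₂a₂⋯uₙaₙ` with each `uᵢ ∈ inc* ∪ dec*` such that no prefix
contains more `dec`'s than `inc`'s. -/
theorem stmt5 {α : Type} [Fintype α] [Nonempty α] :
    Function.Injective (enc (α := α)) ∧
    EncSet α =
      {w | (∃ l : List (List (Vis α) × α),
              w = (l.map fun p => p.1 ++ [Vis.sym p.2]).flatten ∧
              ∀ p ∈ l, (∀ τ ∈ p.1, τ = Vis.inc) ∨ (∀ τ ∈ p.1, τ = Vis.dec)) ∧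
           ∀ p, p <+: w → p.countP isDecB ≤ p.countP isIncB} :=
  stmt5_general
end

section
/- For every OCA A over a nonempty finite alphabet Σ there exists an eOCA Ã over Σ such that L_obs(Ã) = L_obs(A) and, for every w ∈ L_obs(Ã), enc(w) ∈ L_vis(Ã). -/
variable {Q α : Type*}

/-!
Silent runs of `A` are contracted: a transition of the eOCA `Ã` performs a silent run of `A` that
returns to the current counter value, followed by one transition of `A`. A silent run from counter
value `x` to `y` crosses each value in between, so `Ã` can follow it by moving straight from `x` to
`y`, and this is how encodings of observations arise. The guards of `Ã` are ultimately periodic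
because the relation on states given by silent runs from `x` back to `x` takes finitely many values
and determines the one at `x + 1` as soon as `x` is at least the threshold.
-/

section Preliminaries

open Relation

variable {C L S : Type*}

instance [Finite α] : Finite (Vis α) :=
  Finite.of_surjective (Sum.elim Vis.sym fun b : Bool => if b then Vis.inc else Vis.dec) <| by
    rintro (a | _ | _)
    exacts [⟨.inl a, rfl⟩, ⟨.inr true, rfl⟩, ⟨.inr false, rfl⟩]

lemma exists_crossing_of_reflTransGen {r : C → C → Prop} {a b : C} (h : ReflTransGen r a b)
    {U : Set C} (ha : a ∈ U) (hb : b ∉ U) :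
    ∃ c ∈ U, ∃ d ∉ U, ReflTransGen r a c ∧ r c d ∧ ReflTransGen r d b := by
  induction h with
  | refl => exact absurd ha hb
  | @tail c d hac hcd ih =>
    by_cases hc : c ∈ U
    · exact ⟨c, hc, d, hb, hac, hcd, .refl⟩
    · obtain ⟨e, he, f, hf, hae, hef, hfc⟩ := ih hc
      exact ⟨e, he, f, hf, hae, hef, hfc.tail hcd⟩

lemma exists_period_of_finite [Finite S] {u : ℕ → S} {m : ℕ}
    (hu : ∀ i ≥ m, ∀ j ≥ m, u i = u j → u (i + 1) = u (j + 1)) :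
    ∃ t d : ℕ, m ≤ t ∧ 1 ≤ d ∧ ∀ n ≥ t, u n = u (n + d) := by
  obtain ⟨i, j, hij, hu_eq⟩ : ∃ i j, i < j ∧ u (m + i) = u (m + j) := by
    obtain ⟨i, j, hne, h⟩ := Finite.exists_ne_map_eq_of_infinite fun n => u (m + n)
    rcases hne.lt_or_gt with hlt | hlt
    exacts [⟨i, j, hlt, h⟩, ⟨j, i, hlt, h.symm⟩]
  refine ⟨m + i, j - i, by omega, by omega, fun n hn => ?_⟩
  induction n, hn using Nat.le_induction with
  | base => rwa [show m + i + (j - i) = m + j by omega]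
  | succ n hn ih =>
    rw [Nat.add_right_comm]
    exact hu n (by omega) _ (by omega) ih

lemma ultPeriodic_of_finite [Finite S] {u : ℕ → S} {m : ℕ}
    (hu : ∀ i ≥ m, ∀ j ≥ m, u i = u j → u (i + 1) = u (j + 1))
    {X : Set ℕ} {T : Set S} (hX : ∀ n ≥ m, n ∈ X ↔ u n ∈ T) : UltPeriodic X := by
  obtain ⟨t, d, hmt, hd, hper⟩ := exists_period_of_finite hu
  refine ⟨t, d, hd, fun n hn => ?_⟩
  rw [hX n (by omega), hX (n + d) (by omega), hper n hn]

/-- In the transition system `step`, some path labelled `ts` leads from `c` into `target`. For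
automata this describes acceptance without mentioning the list of visited configurations. -/
def ReachesAlong (step : C → L → C → Prop) (target : Set C) : C → List L → Prop
  | c, [] => c ∈ target
  | c, τ :: ts => ∃ c', step c τ c' ∧ ReachesAlong step target c' ts

lemma exists_run_iff_reachesAlong {step : C → L → C → Prop} {run : C → List L → List C → Prop}
    (run_nil : ∀ c cs, run c [] cs ↔ cs = [c])
    (run_cons : ∀ c τ ts cs,
      run c (τ :: ts) cs ↔ ∃ c' cs', step c τ c' ∧ run c' ts cs' ∧ cs = c :: cs')
    (target : Set C) (c : C) (ts : List L) :
    (∃ cs d, run c ts cs ∧ cs.getLast? = some d ∧ d ∈ target) ↔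
      ReachesAlong step target c ts := by
  have run_ne_nil : ∀ {c ts cs}, run c ts cs → cs ≠ [] := by
    rintro c (_ | ⟨τ, ts⟩) cs h
    · simp [(run_nil c cs).1 h]
    · obtain ⟨_, _, _, _, rfl⟩ := (run_cons c τ ts cs).1 h
      simp
  induction ts generalizing c with
  | nil => simp [run_nil, ReachesAlong]
  | cons τ ts ih =>
    simp only [run_cons, ReachesAlong, ← ih]
    constructor
    · rintro ⟨_, d, ⟨c', cs, hstep, hrun, rfl⟩, hlast, hd⟩
      rw [List.getLast?_cons_of_ne_nil (run_ne_nil hrun)] at hlast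
      exact ⟨c', hstep, cs, d, hrun, hlast, hd⟩
    · rintro ⟨c', hstep, cs, d, hrun, hlast, hd⟩
      rw [← List.getLast?_cons_of_ne_nil (x := c) (run_ne_nil hrun)] at hlast
      exact ⟨c :: cs, d, ⟨c', cs, hstep, hrun, rfl⟩, hlast, hd⟩

end Preliminaries

section Encoding

lemma obsMap_cons (τ : Vis (α × ℕ)) (ts : List (Vis (α × ℕ))) :
    obsMap (τ :: ts) = obsMap [τ] ++ obsMap ts := by
  simp only [obsMap, ← List.filterMap_append, List.singleton_append]

/-- The shortest sequence of counter operations leading from counter value `x` to `y`. -/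
def counterMoves (x y : ℕ) : List (Vis α) :=
  if x ≤ y then List.replicate (y - x) Vis.inc else List.replicate (x - y) Vis.dec

lemma obsMap_counterMoves_append (x y : ℕ) (ts : List (Vis (α × ℕ))) :
    obsMap (counterMoves x y ++ ts) = obsMap ts := by
  unfold counterMoves
  split_ifs <;> simp [obsMap]

lemma visMap_counterMoves (x y : ℕ) :
    visMap (counterMoves x y : List (Vis (α × ℕ))) = counterMoves x y := by
  unfold counterMoves
  split_ifs <;> simp [visMap, visOf]

/-- The trace, from counter value `x₀`, of a run whose observation is `w` and whose visibly
projection is `encFrom x₀ w`. -/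
def encTrace : ℕ → List (α × ℕ) → List (Vis (α × ℕ))
  | _, [] => []
  | x₀, (a, x) :: w => counterMoves x₀ x ++ Vis.sym (a, x) :: encTrace x w

lemma obsMap_encTrace (x₀ : ℕ) (w : List (α × ℕ)) : obsMap (encTrace x₀ w) = w := by
  induction w generalizing x₀ with
  | nil => rfl
  | cons p w ih => rw [encTrace, obsMap_counterMoves_append, obsMap_cons, ih]; rfl

lemma visMap_encTrace (x₀ : ℕ) (w : List (α × ℕ)) : visMap (encTrace x₀ w) = encFrom x₀ w := by
  induction w generalizing x₀ with
  | nil => rfl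
  | cons p w ih =>
    calc visMap (encTrace x₀ (p :: w))
        = visMap (counterMoves x₀ p.2) ++ Vis.sym p.1 :: visMap (encTrace p.2 w) :=
          List.map_append
      _ = encFrom x₀ (p :: w) := by rw [visMap_counterMoves, ih]; rfl

end Encoding

namespace EOCA

/-- `B` has an accepting run with trace `ts` from the configuration `c`. -/
abbrev AcceptsFrom (B : EOCA Q α) : Q × ℕ → List (Vis (α × ℕ)) → Prop :=
  ReachesAlong B.step {c | c.2 ∈ B.f c.1}

lemma accTrace_iff (B : EOCA Q α) (ts : List (Vis (α × ℕ))) :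
    B.AccTrace ts ↔ B.AcceptsFrom (B.init, 0) ts := by
  refine exists_run_iff_reachesAlong (run := B.RunFrom) (fun c cs => ⟨?_, ?_⟩)
    (fun c τ ts cs => ⟨?_, ?_⟩) _ _ _
  · rintro ⟨⟩; rfl
  · rintro rfl; exact .nil c
  · rintro (_ | ⟨hstep, hrun⟩); exact ⟨_, _, hstep, hrun, rfl⟩
  · rintro ⟨_, _, hstep, hrun, rfl⟩; exact .cons hstep hrun

end EOCA

namespace OCA

open Relation

variable (A : OCA Q α)

/-- `A` has an accepting run with trace `ts` from the configuration `c`. -/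
abbrev AcceptsFrom : Q × ℕ → List (Vis (α × ℕ)) → Prop :=
  ReachesAlong A.step {c | c.1 ∈ A.final}

lemma accTrace_iff (ts : List (Vis (α × ℕ))) :
    A.AccTrace ts ↔ A.AcceptsFrom (A.init, 0) ts := by
  refine exists_run_iff_reachesAlong (run := A.RunFrom) (fun c cs => ⟨?_, ?_⟩)
    (fun c τ ts cs => ⟨?_, ?_⟩) _ _ _
  · rintro ⟨⟩; rfl
  · rintro rfl; exact .nil c
  · rintro (_ | ⟨hstep, hrun⟩); exact ⟨_, _, hstep, hrun, rfl⟩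
  · rintro ⟨_, _, hstep, hrun, rfl⟩; exact .cons hstep hrun

/-- A step that the observability semantics erases. -/
def SilentStep (c c' : Q × ℕ) : Prop := A.step c Vis.inc c' ∨ A.step c Vis.dec c'

/-- Reachability by runs that read no letter of the alphabet. -/
def Reach : Q × ℕ → Q × ℕ → Prop := ReflTransGen A.SilentStep

/-- Some run that reads no letter of the alphabet leads from `c` to a final state. -/
def ReachesFinal (c : Q × ℕ) : Prop := ∃ d, A.Reach c d ∧ d.1 ∈ A.final

/-- The silent behaviour of `A` at counter value `x`: which pairs of states are joined by a silent
run from `x` back to `x`, and from which states a final state is silently reached. -/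
def silentProfile (x : ℕ) : (Q → Q → Prop) × (Q → Prop) :=
  (fun p q => A.Reach (p, x) (q, x), fun p => A.ReachesFinal (p, x))

variable {A} {p q : Q} {x y x' y' : ℕ} {c d : Q × ℕ} {ts : List (Vis (α × ℕ))}

lemma silentStep_iff : A.SilentStep (p, x) (q, y) ↔
    (y = x + 1 ∧ (p, min x A.m, Vis.inc, q) ∈ A.Δ) ∨
      (x = y + 1 ∧ (p, min x A.m, Vis.dec, q) ∈ A.Δ) := by
  have hdec : 1 ≤ x ∧ y = x - 1 ↔ x = y + 1 := by omega
  simp only [SilentStep, step, ← and_assoc, hdec]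

lemma SilentStep.snd_eq_or (h : A.SilentStep c d) : d.2 = c.2 + 1 ∨ c.2 = d.2 + 1 :=
  (silentStep_iff.1 h).imp And.left And.left

/-- Above the threshold every counter test returns `m`, so the step does not see the counter. -/
lemma SilentStep.translate (h : A.SilentStep (p, x) (q, x')) (hx : A.m ≤ x) (hy : A.m ≤ y)
    (hxy : x' + y = y' + x) : A.SilentStep (p, y) (q, y') := by
  rw [silentStep_iff, min_eq_right hx] at h
  rw [silentStep_iff, min_eq_right hy]
  exact h.imp (And.imp_left fun _ => by omega) (And.imp_left fun _ => by omega)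

lemma Reach.exists_inc (h : A.Reach (p, x) c) (hc : x < c.2) :
    ∃ r r', A.Reach (p, x) (r, x) ∧ A.step (r, x) Vis.inc (r', x + 1) ∧
      A.Reach (r', x + 1) c := by
  obtain ⟨⟨r, z⟩, hr, ⟨r', z'⟩, hr', hpr, hstep, hrc⟩ :=
    exists_crossing_of_reflTransGen h (U := {c | c.2 ≤ x}) (le_refl x) hc.not_ge
  change z ≤ x at hr
  change ¬z' ≤ x at hr'
  have hz := hstep.snd_eq_or
  obtain ⟨rfl, rfl⟩ : z = x ∧ z' = x + 1 := by omega
  rcases hstep with hinc | hdec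
  · exact ⟨r, r', hpr, hinc, hrc⟩
  · exact absurd hdec.2.1 (by omega)

lemma Reach.exists_dec (h : A.Reach (p, x + 1) c) (hc : c.2 ≤ x) :
    ∃ r r', A.Reach (p, x + 1) (r, x + 1) ∧ A.step (r, x + 1) Vis.dec (r', x) ∧
      A.Reach (r', x) c := by
  obtain ⟨⟨r, z⟩, hr, ⟨r', z'⟩, hr', hpr, hstep, hrc⟩ :=
    exists_crossing_of_reflTransGen h (U := {c | x < c.2}) (Nat.lt_succ_self x) hc.not_gt
  change x < z at hr
  change ¬x < z' at hr'
  have hz := hstep.snd_eq_or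
  obtain ⟨rfl, rfl⟩ : z = x + 1 ∧ z' = x := by omega
  rcases hstep with hinc | hdec
  · exact absurd hinc.1 (by omega)
  · exact ⟨r, r', hpr, hdec, hrc⟩

lemma Reach.exists_acceptsFrom (h : A.Reach c d) (hd : A.AcceptsFrom d ts) :
    ∃ ts', A.AcceptsFrom c ts' ∧ obsMap ts' = obsMap ts := by
  induction h using ReflTransGen.head_induction_on with
  | refl => exact ⟨ts, hd, rfl⟩
  | head hstep _ ih =>
    obtain ⟨ts', hacc, hobs⟩ := ih
    rcases hstep with hinc | hdec
    · exact ⟨Vis.inc :: ts', ⟨_, hinc, hacc⟩, hobs⟩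
    · exact ⟨Vis.dec :: ts', ⟨_, hdec, hacc⟩, hobs⟩

/-- The part of the run above `x` is translated, and each excursion to `x` or below that returns
above `x` is replaced by means of `hloop`; the second alternative is a last excursion that is
still in progress. -/
lemma Reach.transfer_succ (hx : A.m ≤ x) (hy : A.m ≤ y)
    (hloop : ∀ r s, A.Reach (r, x) (s, x) → A.Reach (r, y) (s, y))
    (h : A.Reach (p, x + 1) c) :
    (∃ j, c.2 = x + 1 + j ∧ A.Reach (p, y + 1) (c.1, y + 1 + j)) ∨
      (c.2 ≤ x ∧ ∃ r, A.Reach (p, y + 1) (r, y) ∧ A.Reach (r, x) c) := by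
  induction h with
  | refl => exact .inl ⟨0, rfl, .refl⟩
  | @tail c d _ hcd ih =>
    obtain ⟨q, z⟩ := c
    obtain ⟨q', z'⟩ := d
    have hz := hcd.snd_eq_or
    simp only at hz ih ⊢
    rcases ih with ⟨j, rfl, hpq⟩ | ⟨hzx, r, hpr, hrq⟩
    · rcases hz with rfl | hz
      · exact .inl ⟨j + 1, rfl, hpq.tail (hcd.translate (by omega) (by omega) (by omega))⟩
      · have hdown : A.SilentStep (q, y + 1 + j) (q', y + j) :=
          hcd.translate (by omega) (by omega) (by omega)
        rcases j with _ | j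
        · obtain rfl : z' = x := by omega
          exact .inr ⟨le_rfl, q', hpq.tail hdown, .refl⟩
        · refine .inl ⟨j, by omega, ?_⟩
          rw [Nat.add_right_comm]
          exact hpq.tail hdown
    · rcases le_or_gt z' x with hz'x | hxz'
      · exact .inr ⟨hz'x, r, hpr, hrq.tail hcd⟩
      · obtain ⟨rfl, rfl⟩ : z = x ∧ z' = z + 1 := by omega
        have hup : A.SilentStep (q, y) (q', y + 1) := hcd.translate hx hy (by omega)
        exact .inl ⟨0, rfl, (hpr.trans (hloop r q hrq)).tail hup⟩

lemma silentProfile_succ_le (hx : A.m ≤ x) (hy : A.m ≤ y)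
    (h : A.silentProfile x = A.silentProfile y) :
    A.silentProfile (x + 1) ≤ A.silentProfile (y + 1) := by
  simp only [silentProfile, Prod.mk.injEq, funext_iff, eq_iff_iff] at h
  obtain ⟨hloop, hfinal⟩ := h
  have transfer {p c} (h : A.Reach (p, x + 1) c) :=
    h.transfer_succ hx hy fun r s => (hloop r s).1
  refine ⟨fun p q hpq => ?_, fun p ⟨c, hpc, hc⟩ => ?_⟩
  · rcases transfer hpq with ⟨j, hj, hpq'⟩ | ⟨hle, _⟩
    · obtain rfl : j = 0 := by simpa using hj
      exact hpq'
    · exact absurd hle (by simp)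
  · rcases transfer hpc with ⟨j, _, hpc'⟩ | ⟨_, r, hpr, hrc⟩
    · exact ⟨_, hpc', hc⟩
    · obtain ⟨d, hrd, hd⟩ := (hfinal r).1 ⟨c, hrc, hc⟩
      exact ⟨d, hpr.trans hrd, hd⟩

lemma silentProfile_succ_eq (hx : A.m ≤ x) (hy : A.m ≤ y)
    (h : A.silentProfile x = A.silentProfile y) :
    A.silentProfile (x + 1) = A.silentProfile (y + 1) :=
  (silentProfile_succ_le hx hy h).antisymm (silentProfile_succ_le hy hx h.symm)

variable (A)

lemma ultPeriodic_of_mem_iff_silentProfile_mem [Finite Q] {X : Set ℕ}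
    {T : Set ((Q → Q → Prop) × (Q → Prop))}
    (hX : ∀ n ≥ A.m, n ∈ X ↔ A.silentProfile n ∈ T) : UltPeriodic X :=
  ultPeriodic_of_finite (u := A.silentProfile)
    (fun _ hi _ hj => silentProfile_succ_eq hi hj) hX

/-- The counter values at which a silent run from `p` back to the same counter value enables a
`σ`-transition of `A` to `q`. -/
def loopGuard (p : Q) (σ : Vis α) (q : Q) : Set ℕ :=
  {x | ∃ r, A.Reach (p, x) (r, x) ∧ (r, min x A.m, σ, q) ∈ A.Δ}

lemma ultPeriodic_loopGuard [Finite Q] (p : Q) (σ : Vis α) (q : Q) :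
    UltPeriodic (A.loopGuard p σ q) :=
  A.ultPeriodic_of_mem_iff_silentProfile_mem (T := {P | ∃ r, P.1 p r ∧ (r, A.m, σ, q) ∈ A.Δ})
    fun n hn => by simp [loopGuard, silentProfile, min_eq_right hn]

lemma ultPeriodic_reachesFinal [Finite Q] (p : Q) : UltPeriodic {x | A.ReachesFinal (p, x)} :=
  A.ultPeriodic_of_mem_iff_silentProfile_mem (T := {P | P.2 p}) fun _ _ => Iff.rfl

/-- The eOCA `Ã` obtained from `A` by contracting into each transition the silent runs before it
that return to the current counter value, and into acceptance the silent runs to a final state. -/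
def contraction [Finite Q] [Finite α] : EOCA Q α where
  init := A.init
  f p := {x | A.ReachesFinal (p, x)}
  hf := A.ultPeriodic_reachesFinal
  Δ := Set.range fun t : Q × Vis α × Q => (t.1, A.loopGuard t.1 t.2.1 t.2.2, t.2)
  hΔfin := Set.finite_range _
  hΔup := by
    rintro _ ⟨⟨p, σ, q⟩, rfl⟩
    exact A.ultPeriodic_loopGuard p σ q

variable {A} [Finite Q] [Finite α]

lemma contraction_step_iff {τ : Vis (α × ℕ)} : A.contraction.step (p, x) τ (q, y) ↔
    ∃ r, A.Reach (p, x) (r, x) ∧ A.step (r, x) τ (q, y) := by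
  have guard_iff (σ : Vis α) : (∃ S, (p, S, σ, q) ∈ A.contraction.Δ ∧ x ∈ S) ↔
      ∃ r, A.Reach (p, x) (r, x) ∧ (r, min x A.m, σ, q) ∈ A.Δ := by
    constructor
    · rintro ⟨S, ⟨⟨p', σ', q'⟩, h⟩, hx⟩
      obtain ⟨rfl, rfl, rfl, rfl⟩ := by simpa only [Prod.mk.injEq] using h
      exact hx
    · exact fun h => ⟨A.loopGuard p σ q, ⟨(p, σ, q), rfl⟩, h⟩
  rcases τ with ⟨a, z⟩ | _ | _ <;> simp only [EOCA.step, step, guard_iff] <;> tauto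

lemma exists_acceptsFrom_of_contraction (h : A.contraction.AcceptsFrom c ts) :
    ∃ ts', A.AcceptsFrom c ts' ∧ obsMap ts' = obsMap ts := by
  induction ts generalizing c with
  | nil =>
    obtain ⟨d, hcd, hd⟩ := h
    exact hcd.exists_acceptsFrom (ts := []) hd
  | cons τ ts ih =>
    obtain ⟨c', hstep, hc'⟩ := h
    obtain ⟨r, hcr, hstep⟩ := contraction_step_iff.1 hstep
    obtain ⟨ts', hacc, hobs⟩ := ih hc'
    obtain ⟨us, hus, hobs_us⟩ := hcr.exists_acceptsFrom (ts := τ :: ts') ⟨c', hstep, hacc⟩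
    exact ⟨us, hus, by rw [hobs_us, obsMap_cons, hobs, ← obsMap_cons]⟩

lemma contraction_acceptsFrom_of_loop (h : A.Reach (p, x) (q, x))
    (hacc : A.contraction.AcceptsFrom (q, x) ts) : A.contraction.AcceptsFrom (p, x) ts := by
  rcases ts with _ | ⟨τ, ts⟩
  · obtain ⟨d, hqd, hd⟩ := hacc
    exact ⟨d, h.trans hqd, hd⟩
  · obtain ⟨c, hstep, hc⟩ := hacc
    obtain ⟨r, hqr, hstep⟩ := contraction_step_iff.1 hstep
    exact ⟨c, contraction_step_iff.2 ⟨r, h.trans hqr, hstep⟩, hc⟩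

lemma contraction_acceptsFrom_replicate_inc (k : ℕ) (h : A.Reach (p, x) (q, x + k))
    (hacc : A.contraction.AcceptsFrom (q, x + k) ts) :
    A.contraction.AcceptsFrom (p, x) (List.replicate k Vis.inc ++ ts) := by
  induction k generalizing p x with
  | zero => exact contraction_acceptsFrom_of_loop h hacc
  | succ k ih =>
    obtain ⟨r, r', hpr, hstep, hr'q⟩ := h.exists_inc (by simp)
    have hk : x + (k + 1) = x + 1 + k := by omega
    rw [hk] at hr'q hacc
    exact ⟨_, contraction_step_iff.2 ⟨r, hpr, hstep⟩, ih hr'q hacc⟩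

lemma contraction_acceptsFrom_replicate_dec (k : ℕ) (h : A.Reach (p, x + k) (q, x))
    (hacc : A.contraction.AcceptsFrom (q, x) ts) :
    A.contraction.AcceptsFrom (p, x + k) (List.replicate k Vis.dec ++ ts) := by
  induction k generalizing p with
  | zero => exact contraction_acceptsFrom_of_loop h hacc
  | succ k ih =>
    obtain ⟨r, r', hpr, hstep, hr'q⟩ := Reach.exists_dec (x := x + k) h (Nat.le_add_right x k)
    exact ⟨_, contraction_step_iff.2 ⟨r, hpr, hstep⟩, ih hr'q⟩

lemma contraction_acceptsFrom_counterMoves (h : A.Reach (p, x) (q, y))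
    (hacc : A.contraction.AcceptsFrom (q, y) ts) :
    A.contraction.AcceptsFrom (p, x) (counterMoves x y ++ ts) := by
  unfold counterMoves
  split_ifs with hxy
  · obtain ⟨k, rfl⟩ := Nat.exists_eq_add_of_le hxy
    rw [Nat.add_sub_cancel_left]
    exact contraction_acceptsFrom_replicate_inc k h hacc
  · obtain ⟨k, rfl⟩ := Nat.exists_eq_add_of_le (le_of_not_ge hxy)
    rw [Nat.add_sub_cancel_left]
    exact contraction_acceptsFrom_replicate_dec k h hacc

lemma contraction_acceptsFrom_encTrace (h : A.Reach c d) (hacc : A.AcceptsFrom d ts) :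
    A.contraction.AcceptsFrom c (encTrace c.2 (obsMap ts)) := by
  induction ts generalizing c d with
  | nil => exact ⟨d, h, hacc⟩
  | cons τ ts ih =>
    obtain ⟨d', hstep, hd'⟩ := hacc
    rcases τ with ⟨a, z⟩ | _ | _
    · obtain ⟨p, x⟩ := d
      obtain ⟨q, y⟩ := d'
      obtain ⟨rfl, rfl, -⟩ := id hstep
      exact contraction_acceptsFrom_counterMoves h
        ⟨_, contraction_step_iff.2 ⟨p, .refl, hstep⟩, ih .refl hd'⟩
    · exact ih (h.tail (.inl hstep)) hd'
    · exact ih (h.tail (.inr hstep)) hd'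

lemma accTrace_contraction_encTrace {w : List (α × ℕ)} (hw : w ∈ A.Lobs) :
    A.contraction.AccTrace (encTrace 0 w) := by
  obtain ⟨ts, hts, rfl⟩ := hw
  exact (EOCA.accTrace_iff _ _).2
    (contraction_acceptsFrom_encTrace .refl ((A.accTrace_iff ts).1 hts))

lemma lobs_contraction_subset : A.contraction.Lobs ⊆ A.Lobs := by
  rintro _ ⟨ts, hts, rfl⟩
  obtain ⟨ts', hts', hobs⟩ :=
    exists_acceptsFrom_of_contraction ((EOCA.accTrace_iff _ ts).1 hts)
  exact ⟨ts', (A.accTrace_iff ts').2 hts', hobs⟩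

lemma lobs_contraction : A.contraction.Lobs = A.Lobs :=
  lobs_contraction_subset.antisymm fun w hw =>
    ⟨encTrace 0 w, accTrace_contraction_encTrace hw, obsMap_encTrace 0 w⟩

lemma enc_mem_lvis_contraction {w : List (α × ℕ)} (hw : w ∈ A.Lobs) :
    enc w ∈ A.contraction.Lvis :=
  ⟨encTrace 0 w, accTrace_contraction_encTrace hw, visMap_encTrace 0 w⟩

end OCA

/-- every OCA can be turned into an eOCA with the same
observability semantics whose visibly semantics contains the encoding of
every word of its observability semantics. -/
theorem stmt9 {α Q : Type} [Fintype α] [Nonempty α] [Fintype Q] (A : OCA Q α) :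
    ∃ (Q' : Type) (_ : Fintype Q') (B : EOCA Q' α),
      B.Lobs = A.Lobs ∧ ∀ w ∈ B.Lobs, enc w ∈ B.Lvis := by
  refine ⟨Q, inferInstance, A.contraction, OCA.lobs_contraction, fun w hw => ?_⟩
  rw [OCA.lobs_contraction] at hw
  exact OCA.enc_mem_lvis_contraction hw
end

section
/- Let (c_1,d_1),…,(c_n,d_n) be finitely many pairs of natural numbers (with n ≥ 1) and let M = max_i c_i + 2. Then there exist a deterministic M-OCA B over Σ in which every state is final and a map λ from the states of B to subsets of {1,…,n} such that, for every run of B ending in a configuration (q,x), λ(q) = {i ∈ {1,…,n} : x ∈ {c_i + d_i·k : k ∈ ℕ}}. -/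
variable {Q α : Type*}

/-! Let `S i` be finitely many sets of naturals, each periodic from `t` on, and let `D` be a common
multiple of their periods. Whether `x ∈ S i` depends only on the pair `(min x t, x mod D)`. An
automaton can keep this pair up to date: incrementing and decrementing shift the residue, and the
new truncated value is read off the counter test. A decrement leads from `t` to `t - 1` but from
`t + 1` to `t`, so the test has to tell `t` from `t + 1`: this is why the threshold is `t + 1`.
The progression `c + d * ℕ` is periodic from `c + 1` on, also when `d = 0`. -/

/-- `S` has period `p` from `t` on: the condition in `UltPeriodic` with both witnesses explicit. The
period `p = 0` is not excluded. -/
def PeriodicFrom (t p : ℕ) (S : Set ℕ) : Prop :=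
  ∀ x, t ≤ x → (x ∈ S ↔ x + p ∈ S)

namespace PeriodicFrom

variable {S : Set ℕ} {t t' p x y : ℕ}

theorem mono (hS : PeriodicFrom t p S) (htt' : t ≤ t') : PeriodicFrom t' p S :=
  fun x hx ↦ hS x (htt'.trans hx)

theorem periodic_add_mem (hS : PeriodicFrom t p S) : Function.Periodic (fun n ↦ t + n ∈ S) p :=
  fun n ↦ propext (by simpa only [add_assoc] using (hS (t + n) (Nat.le_add_right t n)).symm)

theorem mem_iff_of_modEq (hS : PeriodicFrom t p S) (hx : t ≤ x) (hy : t ≤ y)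
    (hxy : x ≡ y [MOD p]) : x ∈ S ↔ y ∈ S := by
  obtain ⟨a, rfl⟩ := Nat.exists_eq_add_of_le hx
  obtain ⟨b, rfl⟩ := Nat.exists_eq_add_of_le hy
  have hab : a % p = b % p := Nat.ModEq.add_left_cancel' t hxy
  have hmod := hS.periodic_add_mem.map_mod_nat
  exact iff_of_eq ((hmod a).symm.trans (hab ▸ hmod b))

end PeriodicFrom

theorem periodicFrom_arithProgression (c d : ℕ) :
    PeriodicFrom (c + 1) (max d 1) {x | ∃ k, x = c + d * k} := by
  intro x hx
  rcases d.eq_zero_or_pos with rfl | hd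
  · simp only [zero_mul, Set.mem_ofPred_eq, exists_const]
    omega
  · rw [max_eq_left hd]
    constructor
    · rintro ⟨k, rfl⟩
      exact ⟨k + 1, by ring⟩
    · rintro ⟨_ | k, hk⟩
      · omega
      · exact ⟨k, by linarith⟩

/-- The information about a counter value `x` that determines membership in every set with a period
dividing `D` from `t` on: the truncation `min x t` and the residue modulo `D`. -/
def counterClass (t D x : ℕ) : Fin (t + 1) × ZMod D :=
  (Fin.clamp x t, x)

theorem PeriodicFrom.mem_iff_of_counterClass_eq {S : Set ℕ} {t p D x y : ℕ}
    (hS : PeriodicFrom t p S) (hpD : p ∣ D) (hxy : counterClass t D x = counterClass t D y) :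
    x ∈ S ↔ y ∈ S := by
  obtain ⟨hclamp, hcast⟩ := Prod.ext_iff.1 hxy
  have hmin : min x t = min y t := congrArg Fin.val hclamp
  have hmod : x ≡ y [MOD p] := ((ZMod.natCast_eq_natCast_iff x y D).1 hcast).of_dvd hpD
  rcases lt_or_ge x t with hx | hx
  · obtain rfl : x = y := by omega
    rfl
  · exact hS.mem_iff_of_modEq hx (by omega) hmod

namespace OCA

theorem RunFrom.forall_mem {A : OCA Q α} {P : Q × ℕ → Prop}
    (hstep : ∀ c τ c', A.step c τ c' → P c → P c') {c : Q × ℕ} {ts : List (Vis (α × ℕ))}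
    {cs : List (Q × ℕ)} (hrun : A.RunFrom c ts cs) (hc : P c) : ∀ r ∈ cs, P r := by
  induction hrun with
  | nil c => simpa using hc
  | cons hs _ ih => exact List.forall_mem_cons.2 ⟨hc, ih (hstep _ _ _ hs hc)⟩

/-- The OCA with threshold `m`, all states final, and transition function `δ`, where `δ q k σ` is
the target of the transition from `q` under the counter test `k`. -/
def ofFun (init : Q) (m : ℕ) (δ : Q → ℕ → Vis α → Q) : OCA Q α where
  init := init
  final := Set.univ
  m := m
  Δ := {(q, k, σ, q') | q' = δ q k σ ∧ k ≤ m}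
  valid := fun _ h ↦ h.2

theorem deterministic_ofFun (init : Q) (m : ℕ) (δ : Q → ℕ → Vis α → Q) :
    (ofFun init m δ).Deterministic :=
  fun q k σ hk ↦ ⟨δ q k σ, ⟨rfl, hk⟩, fun _ h ↦ h.1⟩

theorem state_eq_of_runFrom_ofFun {m : ℕ} {δ : Q → ℕ → Vis α → Q} {f : ℕ → Q}
    (hsym : ∀ x a, δ (f x) (min x m) (.sym a) = f x)
    (hinc : ∀ x, δ (f x) (min x m) .inc = f (x + 1))
    (hdec : ∀ x, δ (f (x + 1)) (min (x + 1) m) .dec = f x)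
    {ts : List (Vis (α × ℕ))} {cs : List (Q × ℕ)} {q : Q} {x : ℕ}
    (hrun : (ofFun (f 0) m δ).RunFrom (f 0, 0) ts cs) (hlast : cs.getLast? = some (q, x)) :
    q = f x := by
  refine hrun.forall_mem (P := fun c ↦ c.1 = f c.2) ?_ rfl (q, x) (List.mem_of_getLast? hlast)
  rintro ⟨q, x⟩ τ ⟨q', x'⟩ hs hq
  obtain rfl : q = f x := hq
  rcases τ with ⟨a, _⟩ | _ | _
  · obtain ⟨_, rfl, rfl, _⟩ := hs
    exact hsym _ a
  · obtain ⟨rfl, rfl, _⟩ := hs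
    exact hinc x
  · obtain ⟨hx, rfl, rfl, _⟩ := hs
    obtain ⟨y, rfl⟩ := Nat.exists_eq_add_of_le' hx
    exact hdec y

end OCA

/-- The transition function that updates the `counterClass`, given a counter test `k` of threshold
`t + 1`. -/
def counterNext (t D : ℕ) (q : Fin (t + 1) × ZMod D) (k : ℕ) : Vis α → Fin (t + 1) × ZMod D
  | .sym _ => q
  | .inc => (Fin.clamp (k + 1) t, q.2 + 1)
  | .dec => (Fin.clamp (k - 1) t, q.2 - 1)

theorem counterNext_inc (t D x : ℕ) :
    counterNext (α := α) t D (counterClass t D x) (min x (t + 1)) .inc =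
      counterClass t D (x + 1) := by
  refine Prod.ext (Fin.ext ?_) (Nat.cast_succ x).symm
  simp only [counterNext, counterClass, Fin.coe_clamp]
  omega

theorem counterNext_dec (t D x : ℕ) :
    counterNext (α := α) t D (counterClass t D (x + 1)) (min (x + 1) (t + 1)) .dec =
      counterClass t D x := by
  refine Prod.ext (Fin.ext ?_) ?_
  · simp only [counterNext, counterClass, Fin.coe_clamp]
    omega
  · simp only [counterNext, counterClass, Nat.cast_succ, add_sub_cancel_right]

/-- The OCA whose state is the `counterClass` of the current counter value. -/
def counterTracker (α : Type*) (t D : ℕ) : OCA (Fin (t + 1) × ZMod D) α :=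
  .ofFun (counterClass t D 0) (t + 1) (counterNext t D)

theorem state_eq_of_runFrom_counterTracker {t D : ℕ} {ts : List (Vis (α × ℕ))}
    {cs : List ((Fin (t + 1) × ZMod D) × ℕ)} {q : Fin (t + 1) × ZMod D} {x : ℕ}
    (hrun : (counterTracker α t D).RunFrom ((counterTracker α t D).init, 0) ts cs)
    (hlast : cs.getLast? = some (q, x)) : q = counterClass t D x :=
  OCA.state_eq_of_runFrom_ofFun (fun _ _ ↦ rfl) (counterNext_inc t D) (counterNext_dec t D)
    hrun hlast

theorem stmt10_general {α ι : Type*} [Finite ι] {t : ℕ} {p : ι → ℕ} {S : ι → Set ℕ}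
    (hp : ∀ i, p i ≠ 0) (hS : ∀ i, PeriodicFrom t (p i) (S i)) :
    ∃ (Q : Type) (_ : Fintype Q) (B : OCA Q α) (lam : Q → Set ι),
      B.m = t + 1 ∧
      B.final = Set.univ ∧
      B.Deterministic ∧
      ∀ ts cs (q : Q) (x : ℕ), B.RunFrom (B.init, 0) ts cs →
        cs.getLast? = some (q, x) →
        lam q = {i | x ∈ S i} := by
  obtain ⟨_⟩ := nonempty_fintype ι
  let D := ∏ i, p i
  have : NeZero D := ⟨Finset.prod_ne_zero_iff.2 fun i _ ↦ hp i⟩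
  refine ⟨Fin (t + 1) × ZMod D, inferInstance, counterTracker α t D,
    fun q ↦ {i | ∃ y ∈ S i, counterClass t D y = q}, rfl, rfl, OCA.deterministic_ofFun _ _ _, ?_⟩
  intro ts cs q x hrun hlast
  obtain rfl := state_eq_of_runFrom_counterTracker hrun hlast
  ext i
  have hdvd : p i ∣ D := Finset.dvd_prod_of_mem p (Finset.mem_univ i)
  exact ⟨fun ⟨_, hy, hyx⟩ ↦ ((hS i).mem_iff_of_counterClass_eq hdvd hyx).1 hy,
    fun hx ↦ ⟨x, hx, rfl⟩⟩

/-- a deterministic OCA (with all states final) that keeps track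
of the truth values of finitely many arithmetic-progression constraints on the
current counter value. -/
theorem stmt10 {α : Type} [Fintype α] [Nonempty α] (n : ℕ) (hn : 1 ≤ n)
    (c d : Fin n → ℕ) :
    ∃ (Q : Type) (_ : Fintype Q) (B : OCA Q α) (lam : Q → Set (Fin n)),
      B.m = Finset.univ.sup c + 2 ∧
      B.final = Set.univ ∧
      B.Deterministic ∧
      ∀ ts cs (q : Q) (x : ℕ), B.RunFrom (B.init, 0) ts cs →
        cs.getLast? = some (q, x) →
        lam q = {i : Fin n | ∃ k : ℕ, x = c i + d i * k} := by
  exact stmt10_general (fun i ↦ by positivity) fun i ↦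
    (periodicFrom_arithProgression (c i) (d i)).mono
      (Nat.succ_le_succ (Finset.le_sup (Finset.mem_univ i)))
end
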